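/- arXiv:1306.0323 — 3 statements merged into one kernel-verified Lean document; each statement's English description precedes it below -/
import Mathlib

section
/- Let p, w be real-valued measurable functions on a bounded interval (a,b) with p > 0 a.e., 1/p ∈ L¹(a,b), and w ∈ L¹(a,b) with w ≠ 0 a.e. Suppose there exists a real-valued absolutely continuous function g̃ on [a,b] with ∫ₐᵇ p|g̃'|² < ∞ and g̃(x)w(x) > 0 for a.e. x ∈ (a,b). Then there exists a real-valued absolutely continuous function g on [a,b] with g(a) = g(b) = 0, ∫ₐᵇ p|g'|² < ∞, and g(x)w(x) > 0 for a.e. x ∈ (a,b). -/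
open MeasureTheory Real Complex

/-- Remark 3.7 of the paper: if there is a real-valued absolutely continuous
function g̃ on [a,b] with ∫ₐᵇ p|g̃'|² < ∞ and g̃w > 0 a.e., then there is such a
function which in addition vanishes at both endpoints. Absolute continuity is
expressed through an integrable a.e. derivative. -/
theorem comparison_function_vanishing_endpoints
    (a b : ℝ) (hab : a < b) (p w : ℝ → ℝ)
    (hpm : Measurable p) (hwm : Measurable w)
    (hp_pos : ∀ᵐ x ∂(volume.restrict (Set.Ioc a b)), 0 < p x)
    (hp_int : IntegrableOn (fun x => 1 / p x) (Set.Ioc a b))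
    (hw_int : IntegrableOn w (Set.Ioc a b))
    (hw_ne : ∀ᵐ x ∂(volume.restrict (Set.Ioc a b)), w x ≠ 0)
    (gt gt' : ℝ → ℝ) (hgt'm : Measurable gt')
    (hgt'int : IntegrableOn gt' (Set.Icc a b))
    (hgtAC : ∀ x ∈ Set.Icc a b, gt x = gt a + ∫ t in a..x, gt' t)
    (hgt2 : IntegrableOn (fun t => p t * gt' t ^ 2) (Set.Ioc a b))
    (hgtw : ∀ᵐ x ∂(volume.restrict (Set.Ioc a b)), 0 < gt x * w x) :
    ∃ g g' : ℝ → ℝ, Measurable g'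
      ∧ IntegrableOn g' (Set.Icc a b)
      ∧ (∀ x ∈ Set.Icc a b, g x = g a + ∫ t in a..x, g' t)
      ∧ g a = 0 ∧ g b = 0
      ∧ IntegrableOn (fun t => p t * g' t ^ 2) (Set.Ioc a b)
      ∧ (∀ᵐ x ∂(volume.restrict (Set.Ioc a b)), 0 < g x * w x) := by
  classical
  set r : ℝ → ℝ := (Set.Ioc a b).indicator (fun t => 1 / √(p t)) with hr
  set k : ℝ → ℝ := (Set.Icc a b).indicator gt' with hk
  have hrm : Measurable r :=
    Measurable.indicator (measurable_const.div hpm.sqrt) measurableSet_Ioc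
  have hkm : Measurable k := hgt'm.indicator measurableSet_Icc
  have hri : Integrable r := by
    rw [hr, integrable_indicator_iff measurableSet_Ioc]
    have h1 : IntegrableOn (fun x => 1 + 1 / p x) (Set.Ioc a b) :=
      Integrable.add (integrableOn_const (by simp)) hp_int
    refine Integrable.mono' h1 (measurable_const.div hpm.sqrt).aestronglyMeasurable ?_
    filter_upwards [hp_pos] with x hx
    have hs : 0 < √(p x) := Real.sqrt_pos.2 hx
    have h2 : 1 / p x = (1 / √(p x)) ^ 2 := by
      rw [div_pow, Real.sq_sqrt hx.le, one_pow]
    rw [Real.norm_of_nonneg (by positivity), h2]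
    nlinarith [sq_nonneg (1 / √(p x) - 1), sq_nonneg (1 / √(p x))]
  have hki : Integrable k := by
    rw [hk, integrable_indicator_iff measurableSet_Icc]; exact hgt'int
  have hrpos : ∀ᵐ x, x ∈ Set.Ioc a b → 0 < r x := by
    have := (ae_restrict_iff' measurableSet_Ioc).1 hp_pos
    filter_upwards [this] with x hx hxm
    rw [hr, Set.indicator_of_mem hxm]
    have hs : 0 < √(p x) := Real.sqrt_pos.2 (hx hxm)
    positivity
  set F : ℝ → ℝ := fun x => ∫ t in a..x, r t with hF
  set G : ℝ → ℝ := fun x => gt a + ∫ t in a..x, k t with hG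
  have hFc : Continuous F := intervalIntegral.continuous_primitive
    (fun _ _ => hri.intervalIntegrable) a
  have hGc : Continuous G := continuous_const.add (intervalIntegral.continuous_primitive
    (fun _ _ => hki.intervalIntegrable) a)
  have hGgt : ∀ x ∈ Set.Icc a b, G x = gt x := by
    intro x hx
    rw [hgtAC x hx]
    refine congrArg (fun y => gt a + y) ?_
    refine intervalIntegral.integral_congr fun t ht => ?_
    rw [Set.uIcc_of_le hx.1] at ht
    exact Set.indicator_of_mem (show t ∈ Set.Icc a b from ⟨ht.1, ht.2.trans hx.2⟩) _
  have hpos : ∀ c d, a ≤ c → d ≤ b → c < d → 0 < ∫ t in c..d, r t := by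
    intro c d hc hd hcd
    rw [intervalIntegral.integral_of_le hcd.le]
    have hae : ∀ᵐ x ∂(volume.restrict (Set.Ioc c d)), 0 < r x := by
      rw [ae_restrict_iff' measurableSet_Ioc]
      filter_upwards [hrpos] with x hx hxm
      exact hx ⟨hc.trans_lt hxm.1, hxm.2.trans hd⟩
    rw [MeasureTheory.integral_pos_iff_support_of_nonneg_ae (hae.mono fun x hx => hx.le) hri.integrableOn]
    have : (volume.restrict (Set.Ioc c d)) (Function.support r)
        = (volume.restrict (Set.Ioc c d)) Set.univ := by
      refine measure_congr ?_
      filter_upwards [hae] with x hx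
      exact eq_true hx.ne' |>.trans (eq_true trivial).symm
    rw [this]
    simpa using hcd
  set C := F b with hC
  have hrA : AbsolutelyContinuousOnInterval F a b :=
    hri.intervalIntegrable.absolutelyContinuousOnInterval_intervalIntegral (by simp)
  have hconst : ∀ c : ℝ, AbsolutelyContinuousOnInterval (fun _ : ℝ => c) a b := fun c =>
    (LipschitzWith.const c).lipschitzOnWith.absolutelyContinuousOnInterval
  have hGA : AbsolutelyContinuousOnInterval G a b :=
    (hconst (gt a)).fun_add
      (hki.intervalIntegrable.absolutelyContinuousOnInterval_intervalIntegral (by simp))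
  set H : ℝ → ℝ := fun x => F x * (C - F x) with hH
  have hHc : Continuous H := hFc.mul (continuous_const.sub hFc)
  have hHA : AbsolutelyContinuousOnInterval H a b := hrA.fun_mul ((hconst C).fun_sub hrA)
  have hgA : AbsolutelyContinuousOnInterval (fun x => H x * G x) a b := hHA.fun_mul hGA
  set A : ℝ → ℝ := fun x => (C - 2 * F x) * G x with hA
  have hAc : Continuous A := by fun_prop
  set g' : ℝ → ℝ := fun x => A x * r x + H x * k x with hg'
  have hg'm : Measurable g' := (hAc.measurable.mul hrm).add (hHc.measurable.mul hkm)
  have hFa : F a = 0 := by simp [hF]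
  have hHa : H a = 0 := by simp [hH, hFa]
  have hHb : H b = 0 := by simp [hH, hC]
  have hder : ∀ᵐ x, HasDerivAt (fun x => H x * G x) (g' x) x := by
    filter_upwards [LocallyIntegrable.ae_hasDerivAt_integral hri.locallyIntegrable,
      LocallyIntegrable.ae_hasDerivAt_integral hki.locallyIntegrable] with x h1 h2
    have e1 : HasDerivAt F (r x) x := h1 a
    have e2 : HasDerivAt G (k x) x := (h2 a).const_add _
    have e3 : HasDerivAt H _ x := e1.fun_mul (e1.const_sub C)
    refine (e3.fun_mul e2).congr_deriv ?_
    simp only [hg', hA, hH]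
    ring
  refine ⟨fun x => H x * G x, g', hg'm, ?_, ?_, by simp [hHa], by simp [hHb], ?_, ?_⟩
  · exact (hri.integrableOn.continuousOn_mul hAc.continuousOn isCompact_Icc).add
      (hki.integrableOn.continuousOn_mul hHc.continuousOn isCompact_Icc)
  · intro x hx
    have h1 := (hgA.mono (c := a) (d := x) (by
      rw [Set.uIcc_of_le hx.1, Set.uIcc_of_le hab.le]
      exact Set.Icc_subset_Icc_right hx.2)).integral_deriv_eq_sub
    have h2 : ∫ t in a..x, deriv (fun x => H x * G x) t = ∫ t in a..x, g' t := by
      refine intervalIntegral.integral_congr_ae ?_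
      filter_upwards [hder] with t ht _
      exact ht.deriv
    rw [← h2, h1]
    ring
  · have b1 : IntegrableOn (fun x => 2 * A x ^ 2) (Set.Ioc a b) :=
      ((continuous_const.mul (hAc.pow 2)).integrableOn_Icc).mono_set Set.Ioc_subset_Icc_self
    have b2 : IntegrableOn (fun x => (2 * H x ^ 2) * (p x * gt' x ^ 2)) (Set.Ioc a b) :=
      (IntegrableOn.continuousOn_mul (continuous_const.mul (hHc.pow 2)).continuousOn
        ((integrableOn_Icc_iff_integrableOn_Ioc enorm_ne_top).2 hgt2) isCompact_Icc).mono_set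
        Set.Ioc_subset_Icc_self
    refine Integrable.mono' (Integrable.add b1 b2)
      (hpm.mul (hg'm.pow_const 2)).aestronglyMeasurable ?_
    filter_upwards [hp_pos, ae_restrict_mem measurableSet_Ioc] with x hx hxm
    have hkx : k x = gt' x := Set.indicator_of_mem (Set.Ioc_subset_Icc_self hxm) _
    have hrx : r x = 1 / √(p x) := Set.indicator_of_mem hxm _
    have hpr : p x * r x ^ 2 = 1 := by
      rw [hrx, div_pow, Real.sq_sqrt hx.le, one_pow, mul_one_div_cancel hx.ne']
    rw [Real.norm_of_nonneg (by positivity)]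
    simp only [Pi.add_apply, hg', hkx]
    have h3 : 0 ≤ p x * (A x * r x - H x * gt' x) ^ 2 := by positivity
    have h4 : A x ^ 2 = A x ^ 2 * (p x * r x ^ 2) := by rw [hpr, mul_one]
    rw [h4]
    nlinarith
  · have hb : ∀ᵐ x ∂(volume.restrict (Set.Ioc a b)), x ≠ b :=
      ae_restrict_of_ae (by simp [ae_iff, measure_singleton])
    filter_upwards [hgtw, ae_restrict_mem measurableSet_Ioc, hb] with x hx hxm hxb
    have hxb' : x < b := lt_of_le_of_ne hxm.2 hxb
    have h1 : 0 < F x := hpos a x le_rfl hxm.2 hxm.1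
    have h2 : 0 < C - F x := by
      have := hpos x b hxm.1.le le_rfl hxb'
      rwa [← intervalIntegral.integral_interval_sub_left (a := a) hri.intervalIntegrable
        hri.intervalIntegrable] at this
    rw [hGgt x (Set.Ioc_subset_Icc_self hxm), mul_assoc]
    exact mul_pos (mul_pos h1 h2) hx
end

section
/- Let g : [0, 1/π] → ℝ be defined by g(x) := x⁴·sin(1/x) for x ∈ (0, 1/π] and g(0) := 0. Then g is absolutely continuous on [0, 1/π], sup_{x ∈ [0,1/π]} |g(x)| ≤ 0.003, and (∫₀^{1/π} |g'(x)|² dx)^{1/2} ≤ 0.02. -/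
open MeasureTheory Real

lemma aux_sin_tangent (v : ℝ) (h0 : 0 ≤ v) :
    Real.sin v ≤ √2 / 2 * (1 + (v - π / 4)) := by
  have hpi := Real.pi_gt_three
  have hpi2 := Real.pi_lt_d2
  obtain ⟨t, rfl⟩ : ∃ t, v = t + π / 4 := ⟨v - π / 4, by ring⟩
  rw [Real.sin_add, Real.cos_pi_div_four, Real.sin_pi_div_four]
  have hs : 0 ≤ √2 / 2 := by positivity
  have key : Real.sin t + Real.cos t ≤ 1 + t := by
    rcases le_or_gt 0 t with ht | ht
    · have := Real.sin_le ht
      have := Real.cos_le_one t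
      linarith
    · have hw : 0 < -t := by linarith
      have hw1 : -t ≤ 0.79 := by norm_num at *; linarith
      have h1 := Real.sin_gt_sub_cube hw
      have h2 : Real.cos t ≤ 1 - 2 / π ^ 2 * t ^ 2 :=
        Real.cos_le_one_sub_mul_cos_sq (by rw [abs_of_neg ht]; norm_num at *; linarith)
      rw [Real.sin_neg] at h1
      have h3 : (0.2 : ℝ) ≤ 2 / π ^ 2 := by
        rw [le_div_iff₀ (by positivity)]
        norm_num at *
        nlinarith
      have h4 : 0.2 * t ^ 2 ≤ 2 / π ^ 2 * t ^ 2 := by gcongr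
      have h5 : (-t) ^ 3 ≤ 0.79 * t ^ 2 := by nlinarith [sq_nonneg t]
      nlinarith [sq_nonneg t]
  nlinarith

lemma aux_sup (u : ℝ) (hu : π ≤ u) : |Real.sin u| ≤ 0.003 * u ^ 4 := by
  have hpi := Real.pi_gt_d4
  rcases le_or_gt 4.3 u with h | h
  · have h1 : (4.3 : ℝ) ^ 4 ≤ u ^ 4 := by gcongr
    have := Real.abs_sin_le_one u
    norm_num at *
    linarith
  · have h1 : Real.sin u = - Real.sin (u - π) := by rw [Real.sin_sub_pi]; ring
    have h2 : 0 ≤ Real.sin (u - π) :=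
      Real.sin_nonneg_of_nonneg_of_le_pi (by linarith) (by norm_num at *; linarith)
    rw [h1, abs_neg, abs_of_nonneg h2]
    refine (aux_sin_tangent _ (by linarith)).trans ?_
    have hr : √2 ≤ 1.4144 := by
      rw [Real.sqrt_le_left (by norm_num)]; norm_num
    have hr0 : 0 ≤ √2 := by positivity
    have h3 : 1 + (u - π - π / 4) ≤ u - 2.926875 := by norm_num at *; linarith
    have h4 : 0 ≤ u - 2.926875 := by norm_num at *; linarith
    calc √2 / 2 * (1 + (u - π - π / 4)) ≤ √2 / 2 * (u - 2.926875) := by gcongr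
      _ ≤ 1.4144 / 2 * (u - 2.926875) := by gcongr
      _ ≤ 0.003 * u ^ 4 := by
        nlinarith [sq_nonneg (u ^ 2 - 3.892 ^ 2), sq_nonneg (u - 3.892)]

lemma aux_cont (n : ℕ) (c : ℝ) (f : ℝ → ℝ) (hf : Continuous f) (hb : ∀ x, |f x| ≤ 1) :
    Continuous fun x : ℝ => x ^ (n + 1) * f (c / x) := by
  rw [continuous_iff_continuousAt]
  intro x
  by_cases hx : x = 0
  · subst hx
    have h : Filter.Tendsto (fun x : ℝ => |x ^ (n + 1)|) (nhds 0) (nhds 0) := by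
      have : Continuous (fun x : ℝ => |x ^ (n + 1)|) := by fun_prop
      simpa using this.tendsto 0
    have := squeeze_zero_norm (f := fun x : ℝ => x ^ (n + 1) * f (c / x)) (fun x => by
      rw [norm_mul, Real.norm_eq_abs, Real.norm_eq_abs]
      exact mul_le_of_le_one_right (abs_nonneg _) (hb _)) h
    simpa [ContinuousAt] using this
  · have : ContinuousAt (fun x : ℝ => c / x) x := continuousAt_const.div continuousAt_id hx
    exact (by fun_prop : ContinuousAt (fun x : ℝ => x ^ (n + 1)) x).mul
      (hf.continuousAt.comp this)

lemma aux_inv (c x : ℝ) (hx : x ≠ 0) : HasDerivAt (fun x : ℝ => c / x) (-c / x ^ 2) x := by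
  refine HasDerivAt.congr_deriv (f := fun x : ℝ => c / x) ((hasDerivAt_inv hx).const_mul c) ?_
  ring

theorem example_comparison_function :
    ∀ g : ℝ → ℝ,
      (∀ x : ℝ, g x = if x = 0 then 0 else x ^ 4 * Real.sin (1 / x)) →
      (∃ g' : ℝ → ℝ,
          IntegrableOn g' (Set.Icc 0 (1 / π))
        ∧ (∀ x ∈ Set.Ioc (0 : ℝ) (1 / π),
            g' x = 4 * x ^ 3 * Real.sin (1 / x) - x ^ 2 * Real.cos (1 / x))
        ∧ (∀ x ∈ Set.Icc (0 : ℝ) (1 / π), g x = ∫ t in (0 : ℝ)..x, g' t)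
        ∧ Real.sqrt (∫ t in (0 : ℝ)..(1 / π), g' t ^ 2) ≤ 0.02)
      ∧ (∀ x ∈ Set.Icc (0 : ℝ) (1 / π), |g x| ≤ 0.003) := by
  intro g hg
  have hg2 : g = fun x => x ^ 4 * Real.sin (1 / x) := by
    funext x
    rw [hg]
    split_ifs with h
    · simp [h]
    · rfl
  have cg : Continuous g := by
    rw [hg2]; exact aux_cont 3 1 Real.sin Real.continuous_sin Real.abs_sin_le_one
  have cg' : Continuous fun x : ℝ => 4 * x ^ 3 * Real.sin (1 / x) - x ^ 2 * Real.cos (1 / x) := by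
    have h1 := aux_cont 2 1 Real.sin Real.continuous_sin Real.abs_sin_le_one
    have h2 := aux_cont 1 1 Real.cos Real.continuous_cos Real.abs_cos_le_one
    have h3 := (h1.const_mul 4).sub h2
    refine h3.congr fun x => ?_
    simp [mul_assoc]
  refine ⟨⟨fun x => 4 * x ^ 3 * Real.sin (1 / x) - x ^ 2 * Real.cos (1 / x),
    cg'.continuousOn.integrableOn_Icc, fun x _ => rfl, ?_, ?_⟩, ?_⟩
  · intro x hx
    rw [intervalIntegral.integral_eq_sub_of_hasDerivAt_of_le hx.1 cg.continuousOn ?_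
      (cg'.intervalIntegrable _ _)]
    · simp [hg2]
    · intro y hy
      have hy0 : y ≠ 0 := hy.1.ne'
      rw [hg2]
      refine HasDerivAt.congr_deriv ((hasDerivAt_pow 4 y).mul (aux_inv 1 y hy0).sin) ?_
      field_simp
      ring
  · have c1 := aux_cont 6 2 Real.cos Real.continuous_cos Real.abs_cos_le_one
    have c2 := aux_cont 5 2 Real.sin Real.continuous_sin Real.abs_sin_le_one
    have hb : (0 : ℝ) ≤ 1 / π := by positivity
    have cH : Continuous fun x : ℝ => x ^ 5 / 10 + 5 / 4 * x ^ 7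
        - 5 / 4 * (x ^ 7 * Real.cos (2 / x)) - 1 / 4 * (x ^ 6 * Real.sin (2 / x)) :=
      ((by fun_prop : Continuous fun x : ℝ => x ^ 5 / 10 + 5 / 4 * x ^ 7).sub
        (c1.const_mul (5 / 4))).sub (c2.const_mul (1 / 4))
    have main := intervalIntegral.integral_le_sub_of_hasDeriv_right_of_le hb
      cH.continuousOn
      (g' := fun x => (4 * x ^ 3 * Real.sin (1 / x) - x ^ 2 * Real.cos (1 / x)) ^ 2
        + 3 / 4 * x ^ 6 * (1 - Real.cos (2 / x)))
      (φ := fun x => (4 * x ^ 3 * Real.sin (1 / x) - x ^ 2 * Real.cos (1 / x)) ^ 2)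
      (fun x hx => by
        have hx0 : x ≠ 0 := hx.1.ne'
        apply HasDerivAt.hasDerivWithinAt
        have d := ((((hasDerivAt_pow 5 x).div_const 10).add
          ((hasDerivAt_pow 7 x).const_mul (5 / 4))).sub
          (((hasDerivAt_pow 7 x).mul (aux_inv 2 x hx0).cos).const_mul (5 / 4))).sub
          (((hasDerivAt_pow 6 x).mul (aux_inv 2 x hx0).sin).const_mul (1 / 4))
        refine HasDerivAt.congr_deriv d ?_
        have e : (2 : ℝ) / x = 2 * (1 / x) := by ring
        have hsc := Real.sin_sq_add_cos_sq (1 / x)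
        rw [e, Real.cos_two_mul, Real.sin_two_mul]
        have hs : Real.sin (1 / x) ^ 2 = 1 - Real.cos (1 / x) ^ 2 := by linarith
        generalize Real.sin (1 / x) = s at *
        generalize Real.cos (1 / x) = c at *
        push_cast
        field_simp
        ring_nf
        rw [hs]
        ring)
      (cg'.pow 2).continuousOn.integrableOn_Icc
      (fun x _ => by
        have := Real.cos_le_one (2 / x)
        have : 0 ≤ 3 / 4 * x ^ 6 * (1 - Real.cos (2 / x)) :=
          mul_nonneg (by positivity) (by linarith)
        linarith)
    have hp : (2 : ℝ) / (1 / π) = 2 * π := by field_simp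
    rw [hp, Real.cos_two_pi, Real.sin_two_pi] at main
    rw [Real.sqrt_le_left (by norm_num)]
    refine main.trans ?_
    have h5 : (1 / π) ^ 5 ≤ (1 / 3.1) ^ 5 := by
      have := Real.pi_gt_d2
      gcongr
      norm_num at *
      linarith
    norm_num at *
    linarith
  · intro x hx
    rcases hx.1.eq_or_lt with h | h
    · rw [hg, if_pos h.symm]; norm_num
    · have hu : π ≤ 1 / x := by
        rw [le_div_iff₀ h]
        have := hx.2
        rw [le_div_iff₀ Real.pi_pos] at this
        linarith
      have := aux_sup _ hu
      rw [hg2]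
      simp only
      rw [abs_mul, abs_of_pos (by positivity : 0 < x ^ 4)]
      calc x ^ 4 * |Real.sin (1 / x)| ≤ x ^ 4 * (0.003 * (1 / x) ^ 4) := by gcongr
        _ = 0.003 := by field_simp
end

section
/- Fix l, r ∈ ℝ. Then the set of real numbers λ ≠ 0 for which there exists a solution (φ, u) of −(pφ')' + qφ = λwφ on [a,b] with φ not identically zero, u(a) = l·φ(a), u(b) = r·φ(b), and λ·∫ₐᵇ w|φ|² ≤ 0, is finite. -/
open MeasureTheory Real Complex

theorem sl_ibp {a b : ℝ} (hab : a ≤ b) {f g F G : ℝ → ℝ}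
    (hf : IntervalIntegrable f volume a b) (hg : IntervalIntegrable g volume a b)
    (hF : ∀ x ∈ Set.Icc a b, F x = F a + ∫ t in a..x, f t)
    (hG : ∀ x ∈ Set.Icc a b, G x = G a + ∫ t in a..x, g t) :
    ∫ t in a..b, (f t * G t + F t * g t) = F b * G b - F a * G a := by
  have hau : a ∈ Set.uIcc a b := Set.left_mem_uIcc
  have hb : b ∈ Set.Icc a b := ⟨hab, le_rfl⟩
  have key : ∀ (h : ℝ → ℝ) (c : ℝ), IntervalIntegrable h volume a b →
      AbsolutelyContinuousOnInterval (fun x => c + ∫ t in a..x, h t) a b := by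
    intro h c hh
    have h1 := hh.absolutelyContinuousOnInterval_intervalIntegral hau
    have h2 : AbsolutelyContinuousOnInterval (fun _ : ℝ => c) a b :=
      ((LipschitzWith.const c).lipschitzOnWith (s := Set.uIcc a b)).absolutelyContinuousOnInterval
    exact h2.add h1
  have h := (key f (F a) hf).integral_deriv_mul_eq_sub (key g (G a) hg)
  rw [← hF b hb, ← hG b hb] at h
  simp only [intervalIntegral.integral_same, add_zero] at h
  rw [← h]
  apply intervalIntegral.integral_congr_ae
  filter_upwards [hf.ae_hasDerivAt_integral, hg.ae_hasDerivAt_integral] with x h1 h2 hx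
  have hx' := Set.uIoc_subset_uIcc hx
  have e1 := ((h1 hx' a hau).const_add (F a)).deriv
  have e2 := ((h2 hx' a hau).const_add (G a)).deriv
  rw [Set.uIcc_of_le hab] at hx'
  rw [e1, e2, hF x hx', hG x hx']

theorem sl_ae_zero {a b : ℝ} (hab : a < b) {f : ℝ → ℝ}
    (hf : IntervalIntegrable f volume a b)
    (h : ∀ x ∈ Set.Icc a b, ∫ t in a..x, f t = 0) :
    ∀ᵐ x ∂(volume.restrict (Set.Icc a b)), f x = 0 := by
  rw [← restrict_Ioo_eq_restrict_Icc, ae_restrict_iff' measurableSet_Ioo]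
  filter_upwards [hf.ae_hasDerivAt_integral] with x h1 hx
  have hx' : x ∈ Set.uIcc a b := by
    rw [Set.uIcc_of_le hab.le]; exact Set.Ioo_subset_Icc_self hx
  refine (h1 hx' a Set.left_mem_uIcc).unique ?_
  refine (hasDerivAt_const x (0:ℝ)).congr_of_eventuallyEq ?_
  filter_upwards [Ioo_mem_nhds hx.1 hx.2] with y hy
  exact h y (Set.Ioo_subset_Icc_self hy)

theorem sl_cont_zero {a b : ℝ} (hab : a < b) {f : ℝ → ℝ} (hf : ContinuousOn f (Set.Icc a b))
    (h : ∀ᵐ x ∂(volume.restrict (Set.Icc a b)), f x = 0) : ∀ x ∈ Set.Icc a b, f x = 0 := by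
  intro x hx
  exact Measure.eqOn_Icc_of_ae_eq volume hab.ne h hf continuousOn_const hx

/-- `(φ, u)` solves `φ' = P u`, `u' = q φ - w ψ`. -/
structure SLSys (a b : ℝ) (P q w φ u ψ : ℝ → ℝ) : Prop where
  cφ : ContinuousOn φ (Set.Icc a b)
  cu : ContinuousOn u (Set.Icc a b)
  cψ : ContinuousOn ψ (Set.Icc a b)
  eφ : ∀ x ∈ Set.Icc a b, φ x = φ a + ∫ t in a..x, u t * P t
  eu : ∀ x ∈ Set.Icc a b, u x = u a + ∫ t in a..x, (q t * φ t - w t * ψ t)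

section
variable {a b : ℝ} {P q w : ℝ → ℝ}

theorem sl_ii (hab : a ≤ b) {f g : ℝ → ℝ} (hf : IntervalIntegrable f volume a b)
    (hg : ContinuousOn g (Set.Icc a b)) : IntervalIntegrable (fun t => f t * g t) volume a b :=
  hf.mul_continuousOn (by rwa [Set.uIcc_of_le hab])

theorem sl_sub {f : ℝ → ℝ} (hf : IntervalIntegrable f volume a b) {x y : ℝ}
    (hx : x ∈ Set.Icc a b) (hy : y ∈ Set.Icc a b) : IntervalIntegrable f volume x y := by
  refine hf.mono_set ?_
  rw [Set.uIcc_of_le (hx.1.trans hx.2)]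
  exact Set.uIcc_subset_Icc hx hy

theorem SLSys.smul {φ u ψ : ℝ → ℝ} (h : SLSys a b P q w φ u ψ) (c : ℝ) :
    SLSys a b P q w (fun x => c * φ x) (fun x => c * u x) (fun x => c * ψ x) where
  cφ := continuousOn_const.mul h.cφ
  cu := continuousOn_const.mul h.cu
  cψ := continuousOn_const.mul h.cψ
  eφ x hx := by
    rw [h.eφ x hx, mul_add, ← intervalIntegral.integral_const_mul]
    simp only [mul_assoc]
  eu x hx := by
    rw [h.eu x hx, mul_add, ← intervalIntegral.integral_const_mul]
    congr 2; ext t; ring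

theorem SLSys.add (hab : a ≤ b) (hP : IntervalIntegrable P volume a b)
    (hq : IntervalIntegrable q volume a b) (hw : IntervalIntegrable w volume a b)
    {φ u ψ φ' u' ψ' : ℝ → ℝ} (h : SLSys a b P q w φ u ψ) (h' : SLSys a b P q w φ' u' ψ') :
    SLSys a b P q w (fun x => φ x + φ' x) (fun x => u x + u' x) (fun x => ψ x + ψ' x) where
  cφ := h.cφ.add h'.cφ
  cu := h.cu.add h'.cu
  cψ := h.cψ.add h'.cψ
  eφ x hx := by
    have ha : a ∈ Set.Icc a b := ⟨le_rfl, hab⟩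
    have e1 := sl_sub (sl_ii hab hP h.cu) ha hx
    have e2 := sl_sub (sl_ii hab hP h'.cu) ha hx
    rw [h.eφ x hx, h'.eφ x hx]
    simp only [add_mul]
    rw [intervalIntegral.integral_add (by simpa only [mul_comm] using e1)
      (by simpa only [mul_comm] using e2)]
    ring
  eu x hx := by
    have ha : a ∈ Set.Icc a b := ⟨le_rfl, hab⟩
    have e1 := sl_sub ((sl_ii hab hq h.cφ).sub (sl_ii hab hw h.cψ)) ha hx
    have e2 := sl_sub ((sl_ii hab hq h'.cφ).sub (sl_ii hab hw h'.cψ)) ha hx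
    rw [h.eu x hx, h'.eu x hx]
    have := intervalIntegral.integral_add e1 e2
    have e3 : ∫ t in a..x, (q t * (φ t + φ' t) - w t * (ψ t + ψ' t)) =
      ∫ t in a..x, ((q t * φ t - w t * ψ t) + (q t * φ' t - w t * ψ' t)) := by
      congr 1; ext t; ring
    rw [e3, this]
    ring

theorem SLSys.sum (hab : a ≤ b) (hP : IntervalIntegrable P volume a b)
    (hq : IntervalIntegrable q volume a b) (hw : IntervalIntegrable w volume a b)
    {ι : Type*} (s : Finset ι) (c : ι → ℝ) {φ u ψ : ι → ℝ → ℝ}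
    (h : ∀ i, SLSys a b P q w (φ i) (u i) (ψ i)) :
    SLSys a b P q w (fun x => ∑ i ∈ s, c i * φ i x) (fun x => ∑ i ∈ s, c i * u i x)
      (fun x => ∑ i ∈ s, c i * ψ i x) := by
  classical
  induction s using Finset.induction_on with
  | empty =>
    constructor <;> simp [continuousOn_const]
  | insert i s hi ih =>
    simp only [Finset.sum_insert hi]
    exact ((h i).smul (c i)).add hab hP hq hw ih

/-- Green's formula. -/
theorem SLSys.green (hab : a ≤ b) (hP : IntervalIntegrable P volume a b)
    (hq : IntervalIntegrable q volume a b) (hw : IntervalIntegrable w volume a b)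
    {φ u ψ φ' u' ψ' : ℝ → ℝ} (h : SLSys a b P q w φ u ψ) (h' : SLSys a b P q w φ' u' ψ') :
    (∫ t in a..b, q t * (φ t * φ' t)) + (∫ t in a..b, P t * (u t * u' t))
      - ∫ t in a..b, w t * (ψ t * φ' t) = u b * φ' b - u a * φ' a := by
  have i1 : IntervalIntegrable (fun t => q t * (φ t * φ' t)) volume a b :=
    sl_ii hab hq (h.cφ.mul h'.cφ)
  have i2 : IntervalIntegrable (fun t => P t * (u t * u' t)) volume a b :=
    sl_ii hab hP (h.cu.mul h'.cu)
  have i3 : IntervalIntegrable (fun t => w t * (ψ t * φ' t)) volume a b :=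
    sl_ii hab hw (h.cψ.mul h'.cφ)
  have := sl_ibp hab ((sl_ii hab hq h.cφ).sub (sl_ii hab hw h.cψ))
    (by simpa only [mul_comm] using sl_ii hab hP h'.cu) h.eu h'.eφ
  rw [← this, ← intervalIntegral.integral_add i1 i2, ← intervalIntegral.integral_sub (i1.add i2) i3]
  congr 1; ext t; ring

/-- vanishing of `φ` forces vanishing of `u` and `ψ`. -/
theorem SLSys.shift (hab : a < b) (hP : IntervalIntegrable P volume a b)
    (hq : IntervalIntegrable q volume a b) (hw : IntervalIntegrable w volume a b)
    (hP0 : ∀ᵐ x ∂(volume.restrict (Set.Icc a b)), 0 < P x)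
    (hw0 : ∀ᵐ x ∂(volume.restrict (Set.Icc a b)), w x ≠ 0)
    {φ u ψ : ℝ → ℝ} (h : SLSys a b P q w φ u ψ) (h0 : ∀ x ∈ Set.Icc a b, φ x = 0) :
    ∀ x ∈ Set.Icc a b, ψ x = 0 := by
  have ha : a ∈ Set.Icc a b := ⟨le_rfl, hab.le⟩
  have hu : ∀ x ∈ Set.Icc a b, u x = 0 := by
    apply sl_cont_zero hab h.cu
    have := sl_ae_zero hab (f := fun t => u t * P t)
      (by simpa only [mul_comm] using sl_ii hab.le hP h.cu) (fun x hx => by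
        have := h.eφ x hx
        rw [h0 x hx, h0 a ha] at this; linarith)
    filter_upwards [this, hP0] with x h1 h2
    simpa [h2.ne'] using h1
  apply sl_cont_zero hab h.cψ
  have := sl_ae_zero hab (f := fun t => q t * φ t - w t * ψ t)
    ((sl_ii hab.le hq h.cφ).sub (sl_ii hab.le hw h.cψ)) (fun x hx => by
        have := h.eu x hx
        rw [hu x hx, hu a ha] at this; linarith)
  filter_upwards [this, hw0, ae_restrict_mem measurableSet_Icc] with x h1 h2 h3
  rw [h0 x h3] at h1
  simpa [h2] using h1

/-- Cauchy–Schwarz estimate. -/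
theorem SLSys.cs (hab : a < b) (hP : IntervalIntegrable P volume a b)
    (hP0 : ∀ᵐ x ∂(volume.restrict (Set.Icc a b)), 0 < P x)
    {φ u ψ : ℝ → ℝ} (h : SLSys a b P q w φ u ψ) {x y δ : ℝ} (hx : x ∈ Set.Icc a b)
    (hy : y ∈ Set.Icc a b) (hxy : x ≤ y) (hδ : 0 < δ) (hd : ∫ t in x..y, P t ≤ δ) :
    (φ y - φ x) ^ 2 ≤ δ * ∫ t in a..b, P t * (u t * u t) := by
  have ha : a ∈ Set.Icc a b := ⟨le_rfl, hab.le⟩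
  have hb : b ∈ Set.Icc a b := ⟨hab.le, le_rfl⟩
  have i1 : IntervalIntegrable (fun t => P t * (u t * u t)) volume a b :=
    sl_ii hab.le hP (h.cu.mul h.cu)
  have i2 := sl_ii hab.le hP h.cu
  have hsub : Set.Icc x y ⊆ Set.Icc a b := Set.Icc_subset_Icc hx.1 hy.2
  have e1 : φ y - φ x = ∫ t in x..y, P t * u t := by
    have := intervalIntegral.integral_add_adjacent_intervals (sl_sub i2 ha hx) (sl_sub i2 hx hy)
    have e := h.eφ x hx
    have e' := h.eφ y hy
    simp only [mul_comm (u _)] at e e'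
    linarith
  set s := (φ y - φ x) / δ with hs
  have e2 : 0 ≤ ∫ t in x..y, P t * (u t - s) ^ 2 := by
    apply intervalIntegral.integral_nonneg_of_ae_restrict hxy
    filter_upwards [ae_restrict_of_ae_restrict_of_subset hsub hP0] with t ht
    exact mul_nonneg ht.le (sq_nonneg _)
  have e3 : ∫ t in x..y, P t * (u t - s) ^ 2 = (∫ t in x..y, P t * (u t * u t))
      - 2 * s * (∫ t in x..y, P t * u t) + s ^ 2 * ∫ t in x..y, P t := by
    have j1 := sl_sub i1 hx hy
    have j2 := (sl_sub i2 hx hy).const_mul (2 * s)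
    have j3 := (sl_sub hP hx hy).const_mul (s ^ 2)
    rw [← intervalIntegral.integral_const_mul, ← intervalIntegral.integral_const_mul,
      ← intervalIntegral.integral_sub j1 j2, ← intervalIntegral.integral_add (j1.sub j2) j3]
    congr 1; ext t; ring
  have e4 : ∫ t in x..y, P t * (u t * u t) ≤ ∫ t in a..b, P t * (u t * u t) := by
    apply intervalIntegral.integral_mono_interval hx.1 hxy hy.2 _ i1
    filter_upwards [ae_restrict_of_ae_restrict_of_subset Set.Ioc_subset_Icc_self hP0] with t ht
    exact mul_nonneg ht.le (mul_self_nonneg _)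
  rw [e3, ← e1] at e2
  have e5 : φ y - φ x = s * δ := by rw [hs]; field_simp
  rw [e5] at e2 ⊢
  have e6 : s ^ 2 * (∫ t in x..y, P t) ≤ s ^ 2 * δ := by gcongr
  have e7 : s ^ 2 * δ ≤ ∫ t in a..b, P t * (u t * u t) := by nlinarith
  calc (s * δ) ^ 2 = δ * (s ^ 2 * δ) := by ring
    _ ≤ _ := by gcongr

/-- A finite set of points such that functions vanishing there are controlled by energy. -/
theorem sl_points (hab : a < b) (hP : IntervalIntegrable P volume a b) {δ : ℝ} (hδ : 0 < δ) :
    ∃ T : Finset ℝ, a ∈ T ∧ b ∈ T ∧ (∀ y ∈ T, y ∈ Set.Icc a b) ∧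
      ∀ x ∈ Set.Icc a b, ∃ y ∈ T, |∫ t in y..x, P t| ≤ δ := by
  classical
  have ha : a ∈ Set.Icc a b := ⟨le_rfl, hab.le⟩
  have hb : b ∈ Set.Icc a b := ⟨hab.le, le_rfl⟩
  have hc : ContinuousOn (fun x => ∫ t in a..x, P t) (Set.Icc a b) := by
    have := (hP.absolutelyContinuousOnInterval_intervalIntegral Set.left_mem_uIcc).continuousOn
    rwa [Set.uIcc_of_le hab.le] at this
  obtain ⟨T, hT1, hT2⟩ := isCompact_Icc.elim_nhdsWithin_subcover
    (fun y => {x | |(∫ t in a..x, P t) - ∫ t in a..y, P t| < δ})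
    (fun y hy => by
      have := (hc y hy).eventually (Metric.ball_mem_nhds _ hδ)
      simp only [Metric.mem_ball, Real.dist_eq] at this
      exact this)
  refine ⟨insert a (insert b T), by simp, by simp, ?_, ?_⟩
  · intro y hy
    simp only [Finset.mem_insert] at hy
    rcases hy with rfl | rfl | hy
    · exact ha
    · exact hb
    · exact hT1 y hy
  · intro x hx
    have := hT2 hx
    simp only [Set.mem_iUnion, Set.mem_ofPred_eq] at this
    obtain ⟨y, hy, h⟩ := this
    refine ⟨y, by simp [hy], ?_⟩
    have := intervalIntegral.integral_add_adjacent_intervals (sl_sub hP ha (hT1 y hy))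
      (sl_sub hP (hT1 y hy) hx)
    rw [show (∫ t in y..x, P t) = (∫ t in a..x, P t) - ∫ t in a..y, P t by linarith]
    exact h.le


theorem sl_core (hab : a < b) (hP : IntervalIntegrable P volume a b)
    (hq : IntervalIntegrable q volume a b) (hw : IntervalIntegrable w volume a b)
    (hP0 : ∀ᵐ x ∂(volume.restrict (Set.Icc a b)), 0 < P x)
    (hw0 : ∀ᵐ x ∂(volume.restrict (Set.Icc a b)), w x ≠ 0) (l r : ℝ) :
    {lam : ℝ | ∃ φ u : ℝ → ℝ, SLSys a b P q w φ u (fun x => lam * φ x) ∧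
      (∃ x ∈ Set.Icc a b, φ x ≠ 0) ∧ u a = l * φ a ∧ u b = r * φ b ∧
      lam * (∫ t in a..b, w t * (φ t * φ t)) ≤ 0}.Finite := by
  classical
  by_contra hinf
  have hinf : Set.Infinite _ := hinf
  have ha : a ∈ Set.Icc a b := ⟨le_rfl, hab.le⟩
  have hb : b ∈ Set.Icc a b := ⟨hab.le, le_rfl⟩
  set Q := ∫ t in a..b, |q t| with hQ
  have hQ0 : 0 ≤ Q := intervalIntegral.integral_nonneg hab.le (fun _ _ => abs_nonneg _)
  set δ := 1 / (Q + 1) with hδd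
  have hδ : 0 < δ := by positivity
  have hδQ : δ * Q < 1 := by
    rw [hδd, div_mul_eq_mul_div, div_lt_one (by positivity)]; linarith
  obtain ⟨T, haT, hbT, hT, hTx⟩ := sl_points hab hP hδ
  obtain ⟨F, hF, hFc⟩ := hinf.exists_subset_card_eq (T.card + 1)
  have hF' : ∀ j : F, ∃ φ u : ℝ → ℝ, SLSys a b P q w φ u (fun x => (j : ℝ) * φ x) ∧
      (∃ x ∈ Set.Icc a b, φ x ≠ 0) ∧ u a = l * φ a ∧ u b = r * φ b ∧
      (j : ℝ) * (∫ t in a..b, w t * (φ t * φ t)) ≤ 0 := fun j => hF j.2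
  choose φ u hS hne hua hub hle using hF'
  -- orthogonality
  have horth : ∀ j k : F, j ≠ k → ∫ t in a..b, w t * (φ j t * φ k t) = 0 := by
    intro j k hjk
    have g1 := (hS j).green hab.le hP hq hw (hS k)
    have g2 := (hS k).green hab.le hP hq hw (hS j)
    have k1 : ∫ t in a..b, w t * ((j : ℝ) * φ j t * φ k t)
        = j * ∫ t in a..b, w t * (φ j t * φ k t) := by
      rw [← intervalIntegral.integral_const_mul]; congr 1; ext t; ring
    have k2 : ∫ t in a..b, w t * ((k : ℝ) * φ k t * φ j t)
        = k * ∫ t in a..b, w t * (φ j t * φ k t) := by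
      rw [← intervalIntegral.integral_const_mul]; congr 1; ext t; ring
    rw [k1, hua, hub] at g1
    rw [k2, hua, hub] at g2
    simp only [mul_comm (φ k _) (φ j _), mul_comm (u k _) (u j _)] at g2
    have : ((j : ℝ) - k) * ∫ t in a..b, w t * (φ j t * φ k t) = 0 := by linarith
    rcases mul_eq_zero.1 this with h | h
    · exact absurd (Subtype.ext (sub_eq_zero.1 h)) hjk
    · exact h
  -- a nontrivial combination vanishing on `T`
  obtain ⟨c, hc0, hcT⟩ : ∃ c : F → ℝ, c ≠ 0 ∧ ∀ y ∈ T, ∑ j, c j * φ j y = 0 := by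
    have hk : LinearMap.ker (Matrix.mulVecLin (Matrix.of fun (y : T) (j : F) => φ j y)) ≠ ⊥ := by
      apply LinearMap.ker_ne_bot_of_finrank_lt
      simp [hFc]
    obtain ⟨c, hc, hc0⟩ := (Submodule.ne_bot_iff _).1 hk
    refine ⟨c, hc0, fun y hy => ?_⟩
    have := congrFun (LinearMap.mem_ker.1 hc) ⟨y, hy⟩
    simpa [Matrix.mulVec, dotProduct, mul_comm] using this
  have hC := SLSys.sum hab.le hP hq hw Finset.univ c hS
  set Φ := fun x => ∑ j, c j * φ j x with hΦ
  set U := fun x => ∑ j, c j * u j x with hU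
  set D := ∫ t in a..b, P t * (U t * U t) with hD
  have hD0 : 0 ≤ D := by
    apply intervalIntegral.integral_nonneg_of_ae_restrict hab.le
    filter_upwards [hP0] with t ht
    exact mul_nonneg ht.le (mul_self_nonneg _)
  have hsq : ∀ x ∈ Set.Icc a b, Φ x ^ 2 ≤ δ * D := by
    intro x hx
    obtain ⟨y, hy, hyx⟩ := hTx x hx
    have hy0 : Φ y = 0 := hcT y hy
    rcases le_total y x with h | h
    · have := hC.cs hab hP hP0 (hT y hy) hx h hδ ((le_abs_self _).trans hyx)
      rwa [hy0, sub_zero] at this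
    · rw [intervalIntegral.integral_symm, abs_neg] at hyx
      have := hC.cs hab hP hP0 hx (hT y hy) h hδ ((le_abs_self _).trans hyx)
      rwa [hy0, zero_sub, neg_sq] at this
  have hG := hC.green hab.le hP hq hw hC
  rw [show Φ b = 0 from hcT b hbT, show Φ a = 0 from hcT a haT, mul_zero, mul_zero, sub_zero] at hG
  have hwle : ∫ t in a..b, w t * ((∑ j : F, c j * ((j : ℝ) * φ j t)) * Φ t) ≤ 0 := by
    have e : ∫ t in a..b, w t * ((∑ j : F, c j * ((j : ℝ) * φ j t)) * Φ t)
        = ∑ j : F, ∑ k : F, (c j * j * c k) * ∫ t in a..b, w t * (φ j t * φ k t) := by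
      have hint : ∀ j k : F, IntervalIntegrable
          (fun t => (c j * j * c k) * (w t * (φ j t * φ k t))) volume a b := fun j k =>
        (sl_ii hab.le hw ((hS j).cφ.mul (hS k).cφ)).const_mul _
      simp only [← intervalIntegral.integral_const_mul]
      have e1 : ∀ j : F, ∑ k : F, ∫ t in a..b, (c j * j * c k) * (w t * (φ j t * φ k t))
          = ∫ t in a..b, ∑ k : F, (c j * j * c k) * (w t * (φ j t * φ k t)) := fun j =>
        (intervalIntegral.integral_finsetSum (fun k _ => hint j k)).symm
      simp only [e1]
      rw [← intervalIntegral.integral_finsetSum (fun j _ => by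
        simpa only [Finset.sum_fn] using IntervalIntegrable.sum Finset.univ (fun k _ => hint j k))]
      congr 1; ext t
      rw [hΦ]
      simp only [Finset.sum_mul_sum]
      rw [Finset.mul_sum]
      refine Finset.sum_congr rfl fun j _ => ?_
      rw [Finset.mul_sum]
      refine Finset.sum_congr rfl fun k _ => ?_
      ring
    rw [e]
    refine Finset.sum_nonpos fun j _ => ?_
    rw [Finset.sum_eq_single j (fun k _ hk => by rw [horth j k hk.symm, mul_zero]) (by simp)]
    have := hle j
    nlinarith [sq_nonneg (c j)]
  have hqle : -(δ * Q * D) ≤ ∫ t in a..b, q t * (Φ t * Φ t) := by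
    have i1 : IntervalIntegrable (fun t => q t * (Φ t * Φ t)) volume a b :=
      sl_ii hab.le hq (hC.cφ.mul hC.cφ)
    have i2 : IntervalIntegrable (fun t => -(δ * D) * |q t|) volume a b := hq.abs.const_mul _
    have := intervalIntegral.integral_mono_on hab.le i2 i1 (fun t ht => by
      have h1 := hsq t ht
      have h2 := neg_abs_le (q t)
      have h3 := abs_nonneg (q t)
      nlinarith [mul_nonneg h3 (sub_nonneg.2 h1), mul_nonneg (sq_nonneg (Φ t)) (by linarith : 0 ≤ q t + |q t|)])
    rw [intervalIntegral.integral_const_mul] at this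
    rw [← hQ] at this
    linarith
  have hDz : D = 0 := by nlinarith
  have hΦ0 : ∀ x ∈ Set.Icc a b, Φ x = 0 := by
    intro x hx
    have := hsq x hx
    rw [hDz, mul_zero] at this
    nlinarith [sq_nonneg (Φ x), pow_eq_zero_iff (a := Φ x) two_ne_zero]
  -- iterate
  have hit : ∀ s : Finset F, ∀ x ∈ Set.Icc a b,
      ∑ j : F, (c j * ∏ k ∈ s, ((j : ℝ) - k)) * φ j x = 0 := by
    intro s
    induction s using Finset.induction_on with
    | empty =>
      simp only [Finset.prod_empty, mul_one]
      exact hΦ0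
    | insert i s hi ih =>
      have hC' := SLSys.sum hab.le hP hq hw Finset.univ (fun j : F => c j * ∏ k ∈ s, ((j : ℝ) - k)) hS
      have h2 := hC'.shift hab hP hq hw hP0 hw0 ih
      intro x hx
      have h3 := h2 x hx
      have h4 := ih x hx
      have : ∑ j : F, (c j * ∏ k ∈ insert i s, ((j : ℝ) - k)) * φ j x
          = (∑ j : F, (c j * ∏ k ∈ s, ((j : ℝ) - k)) * ((j : ℝ) * φ j x))
            - i * ∑ j : F, (c j * ∏ k ∈ s, ((j : ℝ) - k)) * φ j x := by
        rw [Finset.mul_sum, ← Finset.sum_sub_distrib]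
        refine Finset.sum_congr rfl fun j _ => ?_
        rw [Finset.prod_insert hi]; ring
      rw [this, h3, h4]; ring
  obtain ⟨i, hi⟩ := Function.ne_iff.1 hc0
  obtain ⟨x, hx, hxne⟩ := hne i
  have h := hit (Finset.univ.erase i) x hx
  rw [Finset.sum_eq_single i (fun j _ hj => by
    rw [Finset.prod_eq_zero (i := j) (by simp [hj]) (sub_self _)]; ring) (by simp)] at h
  refine absurd h (mul_ne_zero (mul_ne_zero hi ?_) hxne)
  refine Finset.prod_ne_zero_iff.2 fun k hk => ?_
  exact fun h0 => (Finset.ne_of_mem_erase hk) (Subtype.ext (sub_eq_zero.1 h0)).symm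

end

/-- Applying a real-linear functional (`re` or `im`) to a complex solution. -/
theorem sl_of_complex {a b : ℝ} {p q w : ℝ → ℝ} (hab : a ≤ b) (L : ℂ →L[ℝ] ℝ)
    (hL : ∀ (s : ℝ) (z : ℂ), L (s * z) = s * L z)
    (hP : IntervalIntegrable (fun x => (p x)⁻¹) volume a b)
    (hq : IntervalIntegrable q volume a b) (hw : IntervalIntegrable w volume a b)
    {lam : ℝ} {φ u : ℝ → ℂ} (hφ : ContinuousOn φ (Set.Icc a b)) (hu : ContinuousOn u (Set.Icc a b))
    (eφ : ∀ x ∈ Set.Icc a b, φ x = φ a + ∫ t in a..x, u t / (p t : ℂ))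
    (eu : ∀ x ∈ Set.Icc a b,
            u x = u a + ∫ t in a..x, ((q t : ℂ) - (lam : ℂ) * (w t : ℂ)) * φ t) :
    SLSys a b (fun x => (p x)⁻¹) q w (fun x => L (φ x)) (fun x => L (u x))
      (fun x => lam * L (φ x)) := by
  have ha : a ∈ Set.Icc a b := ⟨le_rfl, hab⟩
  have cmul : ∀ (f : ℝ → ℝ) (g : ℝ → ℂ), IntervalIntegrable f volume a b →
      ContinuousOn g (Set.Icc a b) → ∀ x ∈ Set.Icc a b,
      IntervalIntegrable (fun t => (f t : ℂ) * g t) volume a x := by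
    intro f g hf hg x hx
    have h1 : IntervalIntegrable (fun t => (f t : ℂ) * g t) volume a b :=
      IntervalIntegrable.mul_continuousOn (f := fun t => (f t : ℂ)) ⟨hf.1.ofReal, hf.2.ofReal⟩
        (by rwa [Set.uIcc_of_le hab])
    refine h1.mono_set ?_
    rw [Set.uIcc_of_le hab]
    exact Set.uIcc_subset_Icc ha hx
  refine ⟨L.continuous.comp_continuousOn hφ, L.continuous.comp_continuousOn hu,
    continuousOn_const.mul (L.continuous.comp_continuousOn hφ), ?_, ?_⟩
  · intro x hx
    have e : ∀ t, u t / (p t : ℂ) = (((p t)⁻¹ : ℝ) : ℂ) * u t := by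
      intro t; push_cast; rw [div_eq_mul_inv, mul_comm]
    have := eφ x hx
    simp only [e] at this
    rw [this, map_add, ← L.intervalIntegral_comp_comm (cmul _ _ hP hu x hx)]
    simp only [hL]
    congr 2; ext t; ring
  · intro x hx
    have e : ∀ t, ((q t : ℂ) - (lam : ℂ) * (w t : ℂ)) * φ t
        = ((q t - lam * w t : ℝ) : ℂ) * φ t := by
      intro t; push_cast; ring
    have := eu x hx
    simp only [e] at this
    rw [this, map_add, ← L.intervalIntegral_comp_comm
      (cmul (fun t => q t - lam * w t) _ (hq.sub (hw.const_mul lam)) hφ x hx)]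
    simp only [hL]
    congr 2; ext t; ring



/-- Proposition 4.1 of the paper (for separated self-adjoint boundary
conditions): there are at most finitely many real exceptional eigenvalues,
i.e. real λ ≠ 0 admitting an eigenfunction φ with λ·∫ₐᵇ w|φ|² ≤ 0. -/
theorem exceptional_eigenvalues_finite
    (a b : ℝ) (hab : a < b) (p q w : ℝ → ℝ)
    (hpm : Measurable p) (hqm : Measurable q) (hwm : Measurable w)
    (hp_pos : ∀ᵐ x ∂(volume.restrict (Set.Ioc a b)), 0 < p x)
    (hp_int : IntegrableOn (fun x => 1 / p x) (Set.Ioc a b))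
    (hq_int : IntegrableOn q (Set.Ioc a b))
    (hw_int : IntegrableOn w (Set.Ioc a b))
    (hw_ne : ∀ᵐ x ∂(volume.restrict (Set.Ioc a b)), w x ≠ 0)
    (hw_pos : 0 < volume {x ∈ Set.Ioc a b | 0 < w x})
    (hw_neg : 0 < volume {x ∈ Set.Ioc a b | w x < 0})
    (l r : ℝ) :
    {lam : ℝ | lam ≠ 0 ∧ ∃ φ u : ℝ → ℂ,
        ContinuousOn φ (Set.Icc a b) ∧ ContinuousOn u (Set.Icc a b)
      ∧ (∀ x ∈ Set.Icc a b, φ x = φ a + ∫ t in a..x, u t / (p t : ℂ))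
      ∧ (∀ x ∈ Set.Icc a b,
            u x = u a + ∫ t in a..x, ((q t : ℂ) - (lam : ℂ) * (w t : ℂ)) * φ t)
      ∧ (∃ x ∈ Set.Icc a b, φ x ≠ 0)
      ∧ u a = (l : ℂ) * φ a ∧ u b = (r : ℂ) * φ b
      ∧ lam * (∫ t in a..b, w t * ‖φ t‖ ^ 2) ≤ 0}.Finite := by
  have hP : IntervalIntegrable (fun x => (p x)⁻¹) volume a b := by
    rw [intervalIntegrable_iff_integrableOn_Ioc_of_le hab.le]
    simpa only [one_div] using hp_int
  have hq : IntervalIntegrable q volume a b :=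
    (intervalIntegrable_iff_integrableOn_Ioc_of_le hab.le).2 hq_int
  have hw : IntervalIntegrable w volume a b :=
    (intervalIntegrable_iff_integrableOn_Ioc_of_le hab.le).2 hw_int
  have hP0 : ∀ᵐ x ∂(volume.restrict (Set.Icc a b)), 0 < (p x)⁻¹ := by
    rw [← restrict_Ioc_eq_restrict_Icc]
    filter_upwards [hp_pos] with x hx using inv_pos.2 hx
  have hw0 : ∀ᵐ x ∂(volume.restrict (Set.Icc a b)), w x ≠ 0 := by
    rwa [← restrict_Ioc_eq_restrict_Icc]
  refine (sl_core hab hP hq hw hP0 hw0 l r).subset ?_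
  rintro lam ⟨-, φ, u, cφ, cu, eφ, eu, ⟨x, hx, hxne⟩, hua, hub, hle⟩
  have hre := sl_of_complex hab.le reCLM (fun s z => by simp) hP hq hw cφ cu eφ eu
  have him := sl_of_complex hab.le imCLM (fun s z => by simp) hP hq hw cφ cu eφ eu
  simp only [reCLM_apply, imCLM_apply] at hre him
  have i1 : IntervalIntegrable (fun t => w t * ((φ t).re * (φ t).re)) volume a b :=
    sl_ii hab.le hw (hre.cφ.mul hre.cφ)
  have i2 : IntervalIntegrable (fun t => w t * ((φ t).im * (φ t).im)) volume a b :=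
    sl_ii hab.le hw (him.cφ.mul him.cφ)
  have hsum : ∫ t in a..b, w t * ‖φ t‖ ^ 2 = (∫ t in a..b, w t * ((φ t).re * (φ t).re))
      + ∫ t in a..b, w t * ((φ t).im * (φ t).im) := by
    rw [← intervalIntegral.integral_add i1 i2]
    congr 1; ext t
    rw [← Complex.normSq_eq_norm_sq, Complex.normSq_apply]; ring
  have zint : ∀ f : ℝ → ℝ, (¬ ∃ x ∈ Set.Icc a b, f x ≠ 0) →
      ∫ t in a..b, w t * (f t * f t) = 0 := by
    intro f hf
    push Not at hf
    rw [intervalIntegral.integral_congr (g := fun _ => (0:ℝ))]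
    · simp
    · intro t ht
      rw [Set.uIcc_of_le hab.le] at ht
      simp [hf t ht]
  rw [hsum] at hle
  have R : (∃ x ∈ Set.Icc a b, (φ x).re ≠ 0) →
      lam * (∫ t in a..b, w t * ((φ t).re * (φ t).re)) ≤ 0 → _ := fun h1 h2 =>
    (⟨fun x => (φ x).re, fun x => (u x).re, hre, h1, by simp [hua], by simp [hub], h2⟩ :
      lam ∈ {lam : ℝ | ∃ φ u : ℝ → ℝ, SLSys a b (fun x => (p x)⁻¹) q w φ u (fun x => lam * φ x) ∧
      (∃ x ∈ Set.Icc a b, φ x ≠ 0) ∧ u a = l * φ a ∧ u b = r * φ b ∧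
      lam * (∫ t in a..b, w t * (φ t * φ t)) ≤ 0})
  have I : (∃ x ∈ Set.Icc a b, (φ x).im ≠ 0) →
      lam * (∫ t in a..b, w t * ((φ t).im * (φ t).im)) ≤ 0 → _ := fun h1 h2 =>
    (⟨fun x => (φ x).im, fun x => (u x).im, him, h1, by simp [hua], by simp [hub], h2⟩ :
      lam ∈ {lam : ℝ | ∃ φ u : ℝ → ℝ, SLSys a b (fun x => (p x)⁻¹) q w φ u (fun x => lam * φ x) ∧
      (∃ x ∈ Set.Icc a b, φ x ≠ 0) ∧ u a = l * φ a ∧ u b = r * φ b ∧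
      lam * (∫ t in a..b, w t * (φ t * φ t)) ≤ 0})
  by_cases h1 : ∃ x ∈ Set.Icc a b, (φ x).re ≠ 0
  · by_cases h2 : ∃ x ∈ Set.Icc a b, (φ x).im ≠ 0
    · by_cases h3 : lam * (∫ t in a..b, w t * ((φ t).re * (φ t).re)) ≤ 0
      · exact R h1 h3
      · exact I h2 (by linarith)
    · rw [zint _ h2, add_zero] at hle
      exact R h1 hle
  · rw [zint _ h1, zero_add] at hle
    refine I ?_ hle
    by_contra h2
    push Not at h1 h2
    exact hxne (Complex.ext (h1 x hx) (h2 x hx))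
end
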